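/- The entrywise assignment L^± ↦ (L^±)^{−1}, i.e. sending each generator l^±_{ij} of U_q(gl_n) to the (i,j) entry of the inverse of the generator matrix L^± of U_{q^{−1}}(gl_n), defines an algebra isomorphism from U_q(gl_n) onto U_{q^{−1}}(gl_n). -/

import Mathlib

open Matrix

noncomputable section

/-- The `R`-matrix of `U_q(gl_n)` as an `n²×n²` matrix. -/
def Rmat (q : ℂ) (n : ℕ) : Matrix (Fin n × Fin n) (Fin n × Fin n) ℂ :=
  fun p r =>
    (if p = r then (if p.1 = p.2 then q else 1) else 0) +
      (if r.1 = p.2 ∧ r.2 = p.1 ∧ p.1 < p.2 then q - q⁻¹ else 0)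

/-- Generators of `U_q(gl_n)`: a sign (`true` for `+`) and a pair of indices. -/
abbrev GenGL (n : ℕ) := Bool × Fin n × Fin n

/-- The generator `l^±_{ij}` in the free algebra. -/
def gl (n : ℕ) (p : Bool) (i j : Fin n) : FreeAlgebra ℂ (GenGL n) :=
  FreeAlgebra.ι ℂ (p, i, j)

/-- Embedding of an `n×n` matrix into the first tensor leg of `End(ℂ^n)⊗End(ℂ^n)`. -/
def leg1 {n : ℕ} {A : Type*} [Semiring A] (m : Fin n → Fin n → A) :
    Matrix (Fin n × Fin n) (Fin n × Fin n) A :=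
  fun v w => if v.2 = w.2 then m v.1 w.1 else 0

/-- Embedding of an `n×n` matrix into the second tensor leg of `End(ℂ^n)⊗End(ℂ^n)`. -/
def leg2 {n : ℕ} {A : Type*} [Semiring A] (m : Fin n → Fin n → A) :
    Matrix (Fin n × Fin n) (Fin n × Fin n) A :=
  fun v w => if v.1 = w.1 then m v.2 w.2 else 0

/-- The `R`-matrix with entries in the free algebra. -/
def RcGL (q : ℂ) (n : ℕ) : Matrix (Fin n × Fin n) (Fin n × Fin n) (FreeAlgebra ℂ (GenGL n)) :=
  (Rmat q n).map (algebraMap ℂ (FreeAlgebra ℂ (GenGL n)))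

/-- The defining relations of `U_q(gl_n)` in its `RTT` presentation. -/
inductive relGL (q : ℂ) (n : ℕ) :
    FreeAlgebra ℂ (GenGL n) → FreeAlgebra ℂ (GenGL n) → Prop
  | tri_minus {i j : Fin n} : i < j → relGL q n (gl n false i j) 0
  | tri_plus {i j : Fin n} : i < j → relGL q n (gl n true j i) 0
  | diag_mp (i : Fin n) : relGL q n (gl n false i i * gl n true i i) 1
  | diag_pm (i : Fin n) : relGL q n (gl n true i i * gl n false i i) 1
  | rll (p : Bool) (v w : Fin n × Fin n) :
      relGL q n
        ((RcGL q n * leg1 (gl n p) * leg2 (gl n p)) v w)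
        ((leg2 (gl n p) * leg1 (gl n p) * RcGL q n) v w)
  | rll_pm (v w : Fin n × Fin n) :
      relGL q n
        ((RcGL q n * leg1 (gl n true) * leg2 (gl n false)) v w)
        ((leg2 (gl n false) * leg1 (gl n true) * RcGL q n) v w)

/-- The quantized enveloping algebra `U_q(gl_n)` in its `RTT` presentation. -/
abbrev UqGL (q : ℂ) (n : ℕ) := RingQuot (relGL q n)

/-- The generator `l^±_{ij}` of `U_q(gl_n)`. -/
def lG (q : ℂ) (n : ℕ) (p : Bool) (i j : Fin n) : UqGL q n :=
  RingQuot.mkAlgHom ℂ (relGL q n) (gl n p i j)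

/-- The generator matrix `L^± = [l^±_{ij}]`. -/
def LM (q : ℂ) (n : ℕ) (p : Bool) : Matrix (Fin n) (Fin n) (UqGL q n) :=
  fun i j => lG q n p i j

/-- The diagonal matrix `D = diag(q^{n−1}, q^{n−3}, …, q^{−n+1})` over `A`. -/
def Dmat (q : ℂ) (n : ℕ) (A : Type*) [Ring A] [Algebra ℂ A] : Matrix (Fin n) (Fin n) A :=
  Matrix.diagonal fun i => algebraMap ℂ A (q ^ ((n : ℤ) - 1 - 2 * (i : ℤ)))

/-- The inverse diagonal matrix `D⁻¹`. -/
def Dmatinv (q : ℂ) (n : ℕ) (A : Type*) [Ring A] [Algebra ℂ A] : Matrix (Fin n) (Fin n) A :=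
  Matrix.diagonal fun i => algebraMap ℂ A (q ^ (-((n : ℤ) - 1 - 2 * (i : ℤ))))

/-- Quantum trace `tr_q X = tr(D X)`. -/
def trq {n : ℕ} {A : Type*} [Ring A] [Algebra ℂ A] (q : ℂ) (X : Matrix (Fin n) (Fin n) A) : A :=
  Matrix.trace (Dmat q n A * X)

/-- The `q`-number `[k]_q`. -/
def qint (q : ℂ) (k : ℤ) : ℂ := (q ^ k - q ^ (-k)) / (q - q⁻¹)

end

/-! Over any algebra `A`, the pair `L^±` of generator matrices amounts to a pair of triangular
matrices with mutually inverse diagonals satisfying `R L₁ L₂ = L₂ L₁ R`. Such matrices are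
invertible, and their inverses are triangular with the two diagonals exchanged. Inverting both sides
of an `RLL` relation turns `R` into `R⁻¹`, and `R⁻¹` is the `R`-matrix at `q⁻¹`, because
`R = D + (q - q⁻¹) E` with `E² = 0`, `D E = E D = E` and `D` inverted by `q ↦ q⁻¹`. So inversion of
`L^±` gives homomorphisms between `U_q(gl_n)` and `U_{q⁻¹}(gl_n)` in both directions. Composing them
inverts the generator matrices twice. -/

open scoped Ring

section RingInverse

variable {M₀ N₀ : Type*} [MonoidWithZero M₀] [MonoidWithZero N₀]

lemma ringInverse_eq_of_mul_eq_one {x y : M₀} (hx : IsUnit x) (h : y * x = 1) : x⁻¹ʳ = y :=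
  (left_inv_eq_right_inv h (Ring.mul_inverse_cancel x hx)).symm

lemma map_ringInverse {F : Type*} [FunLike F M₀ N₀] [MonoidWithZeroHomClass F M₀ N₀] (f : F)
    {x : M₀} (hx : IsUnit x) : f x⁻¹ʳ = (f x)⁻¹ʳ :=
  (ringInverse_eq_of_mul_eq_one (hx.map f)
    (by rw [← map_mul, Ring.inverse_mul_cancel x hx, map_one])).symm

lemma ringInverse_mul_ringInverse_mul_ringInverse {r x y : M₀} (hr : IsUnit r) (hx : IsUnit x)
    (h : r * x * y = y * x * r) : r⁻¹ʳ * x⁻¹ʳ * y⁻¹ʳ = y⁻¹ʳ * x⁻¹ʳ * r⁻¹ʳ := by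
  have key := congrArg Ring.inverse h
  rw [Ring.inverse_mul (.inl (hr.mul hx)), Ring.inverse_mul (.inl hr), Ring.inverse_mul (.inr hr),
    Ring.inverse_mul (.inr hx), ← mul_assoc, ← mul_assoc] at key
  exact key.symm

end RingInverse

section Triangular

variable {m α A : Type*} [Fintype m] [DecidableEq m] [LinearOrder α] [Ring A]

/-- Forward substitution: the left inverse of a triangular matrix `T` with invertible diagonal,
computed along each row `i` by solving `∑ k, M i k * T k j = δ i j` for `M i j`. -/
noncomputable def forwardSubst [WellFoundedLT α] (b : m → α) (T : Matrix m m A) (i j : m) : A :=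
  ((1 : Matrix m m A) i j - ∑ k : {k // b k < b j}, forwardSubst b T i k * T k j) * (T j j)⁻¹ʳ
termination_by WellFounded.wrap (wellFounded_lt (α := α)) (b j)
decreasing_by exact k.2

variable [WellFoundedLT α] {b : m → α} {T : Matrix m m A}

lemma forwardSubst_mul_self (hb : Function.Injective b) (hT : T.BlockTriangular b)
    (hd : ∀ i, IsUnit (T i i)) : of (forwardSubst b T) * T = 1 := by
  ext i j
  have split_sum : ∑ k, forwardSubst b T i k * T k j =
      ∑ k : {k // b k < b j}, forwardSubst b T i k * T k j + forwardSubst b T i j * T j j := by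
    rw [← Fintype.sum_subtype_add_sum_subtype (fun k => b k < b j),
      Fintype.sum_eq_single (⟨j, lt_irrefl _⟩ : {k // ¬ b k < b j})]
    intro k hk
    have hjk : b j < b k := (not_lt.1 k.2).lt_of_ne fun h => hk (Subtype.ext (hb h.symm))
    rw [hT hjk, mul_zero]
  have diag_term : forwardSubst b T i j * T j j =
      (1 : Matrix m m A) i j - ∑ k : {k // b k < b j}, forwardSubst b T i k * T k j := by
    rw [forwardSubst, Ring.inverse_mul_cancel_right _ _ (hd j)]
  simp only [mul_apply, of_apply, split_sum, diag_term, add_sub_cancel]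

lemma blockTriangular_forwardSubst : (of (forwardSubst b T)).BlockTriangular b := by
  intro i j hij
  induction j using (InvImage.wf b wellFounded_lt).induction with
  | _ j ih =>
    have hsum : ∑ k : {k // b k < b j}, forwardSubst b T i k * T k j = 0 :=
      Finset.sum_eq_zero fun k _ => by
        rw [show forwardSubst b T i k = 0 from ih k k.2 (k.2.trans hij), zero_mul]
    rw [of_apply, forwardSubst, hsum, one_apply_ne (ne_of_apply_ne b hij.ne'), sub_zero, zero_mul]

lemma forwardSubst_apply_self (i : m) : forwardSubst b T i i = (T i i)⁻¹ʳ := by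
  have hsum : ∑ k : {k // b k < b i}, forwardSubst b T i k * T k i = 0 :=
    Finset.sum_eq_zero fun k _ => by
      rw [show forwardSubst b T i k = 0 from blockTriangular_forwardSubst k.2, zero_mul]
  rw [forwardSubst, hsum, one_apply_eq, sub_zero, one_mul]

lemma isUnit_of_blockTriangular (hb : Function.Injective b) (hT : T.BlockTriangular b)
    (hd : ∀ i, IsUnit (T i i)) : IsUnit T := by
  have hleft := forwardSubst_mul_self hb hT hd
  have hleft' : of (forwardSubst b (of (forwardSubst b T))) * of (forwardSubst b T) = 1 :=
    forwardSubst_mul_self hb blockTriangular_forwardSubst fun i => by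
      simpa [forwardSubst_apply_self] using hd i
  have hright : T * of (forwardSubst b T) = 1 := by
    rwa [left_inv_eq_right_inv hleft' hleft] at hleft'
  exact ⟨⟨T, _, hright, hleft⟩, rfl⟩

lemma ringInverse_eq_forwardSubst (hb : Function.Injective b) (hT : T.BlockTriangular b)
    (hd : ∀ i, IsUnit (T i i)) : T⁻¹ʳ = of (forwardSubst b T) :=
  ringInverse_eq_of_mul_eq_one (isUnit_of_blockTriangular hb hT hd) (forwardSubst_mul_self hb hT hd)

lemma blockTriangular_ringInverse (hb : Function.Injective b) (hT : T.BlockTriangular b)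
    (hd : ∀ i, IsUnit (T i i)) : T⁻¹ʳ.BlockTriangular b :=
  ringInverse_eq_forwardSubst hb hT hd ▸ blockTriangular_forwardSubst

lemma ringInverse_apply_self (hb : Function.Injective b) (hT : T.BlockTriangular b)
    (hd : ∀ i, IsUnit (T i i)) (i : m) : T⁻¹ʳ i i = (T i i)⁻¹ʳ := by
  rw [ringInverse_eq_forwardSubst hb hT hd, of_apply, forwardSubst_apply_self]

end Triangular

section RMatrix

variable {n : ℕ}

/-- The diagonal part of the `R`-matrix. -/
noncomputable def rDiag (q : ℂ) (n : ℕ) : Matrix (Fin n × Fin n) (Fin n × Fin n) ℂ :=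
  diagonal fun v => if v.1 = v.2 then q else 1

/-- The nilpotent matrix `E = ∑_{i<j} e_{ij} ⊗ e_{ji}`, so that the `R`-matrix is
`rDiag + (q - q⁻¹) E`. -/
noncomputable def rNilp (n : ℕ) : Matrix (Fin n × Fin n) (Fin n × Fin n) ℂ :=
  of fun v w => if w = v.swap ∧ v.1 < v.2 then 1 else 0

lemma Rmat_eq_rDiag_add (q : ℂ) (n : ℕ) : Rmat q n = rDiag q n + (q - q⁻¹) • rNilp n := by
  ext v w
  simp [Rmat, rDiag, rNilp, diagonal_apply, Prod.ext_iff, and_assoc]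

lemma rDiag_mul_rDiag {q q' : ℂ} (h : q * q' = 1) : rDiag q n * rDiag q' n = 1 := by
  rw [rDiag, rDiag, diagonal_mul_diagonal, ← diagonal_one]
  congr! with v
  split_ifs <;> simp [h]

lemma rDiag_mul_rNilp (q : ℂ) : rDiag q n * rNilp n = rNilp n := by
  ext v w
  simp only [rDiag, rNilp, diagonal_mul, of_apply]
  grind

lemma rNilp_mul_rDiag (q : ℂ) : rNilp n * rDiag q n = rNilp n := by
  ext v w
  simp only [rDiag, rNilp, mul_diagonal, of_apply]
  grind

lemma rNilp_mul_self : rNilp n * rNilp n = 0 := by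
  ext v w
  refine Finset.sum_eq_zero fun x _ => ?_
  simp only [rNilp, of_apply]
  grind

lemma Rmat_mul_Rmat {q q' : ℂ} (h : q * q' = 1) : Rmat q n * Rmat q' n = 1 := by
  obtain rfl : q' = q⁻¹ := eq_inv_of_mul_eq_one_right h
  simp only [Rmat_eq_rDiag_add, add_mul, mul_add, smul_mul_assoc, mul_smul_comm, inv_inv,
    rDiag_mul_rDiag h, rDiag_mul_rNilp, rNilp_mul_rDiag, rNilp_mul_self]
  module

/-- The `R`-matrix with entries in a `ℂ`-algebra `A`. -/
noncomputable def rMatrix (q : ℂ) (n : ℕ) (A : Type*) [Semiring A] [Algebra ℂ A] :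
    Matrix (Fin n × Fin n) (Fin n × Fin n) A :=
  (Rmat q n).map (algebraMap ℂ A)

lemma rMatrix_mul_rMatrix {q q' : ℂ} (h : q * q' = 1) (A : Type*) [Semiring A] [Algebra ℂ A] :
    rMatrix q n A * rMatrix q' n A = 1 := by
  rw [rMatrix, rMatrix, ← Matrix.map_mul, Rmat_mul_Rmat h]
  simp

lemma rMatrix_map {A B : Type*} [Semiring A] [Algebra ℂ A] [Semiring B] [Algebra ℂ B] (q : ℂ)
    (g : A →ₐ[ℂ] B) : (rMatrix q n A).map g = rMatrix q n B := by
  ext v w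
  simp [rMatrix]

end RMatrix

section Legs

variable {n : ℕ} {A B : Type*} [Semiring A] [Semiring B]

/-- The first tensor leg `X ↦ X ⊗ 1` as a ring homomorphism. -/
def leg1RingHom (n : ℕ) (A : Type*) [Semiring A] :
    Matrix (Fin n) (Fin n) A →+* Matrix (Fin n × Fin n) (Fin n × Fin n) A :=
  (blockDiagonalRingHom _ _ A).comp (Pi.constRingHom _ _)

/-- The second tensor leg `X ↦ 1 ⊗ X` as a ring homomorphism, obtained from the first one by
exchanging the tensor factors. -/
def leg2RingHom (n : ℕ) (A : Type*) [Semiring A] :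
    Matrix (Fin n) (Fin n) A →+* Matrix (Fin n × Fin n) (Fin n × Fin n) A :=
  (reindexRingEquiv A (Equiv.prodComm (Fin n) (Fin n))).toRingHom.comp (leg1RingHom n A)

lemma isUnit_leg1 {X : Matrix (Fin n) (Fin n) A} (hX : IsUnit X) : IsUnit (leg1 X) :=
  hX.map (leg1RingHom n A)

lemma leg1_ringInverse {X : Matrix (Fin n) (Fin n) A} (hX : IsUnit X) :
    leg1 (X⁻¹ʳ : Matrix (Fin n) (Fin n) A) = (leg1 X)⁻¹ʳ :=
  map_ringInverse (leg1RingHom n A) hX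

lemma leg2_ringInverse {X : Matrix (Fin n) (Fin n) A} (hX : IsUnit X) :
    leg2 (X⁻¹ʳ : Matrix (Fin n) (Fin n) A) = (leg2 X)⁻¹ʳ :=
  map_ringInverse (leg2RingHom n A) hX

lemma leg1_map (g : A →+* B) (X : Fin n → Fin n → A) :
    (leg1 X).map g = leg1 fun i j => g (X i j) := by
  ext v w
  simp [leg1, apply_ite g]

lemma leg2_map (g : A →+* B) (X : Fin n → Fin n → A) :
    (leg2 X).map g = leg2 fun i j => g (X i j) := by
  ext v w
  simp [leg2, apply_ite g]

end Legs

section LOperators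

variable {n : ℕ} {q q' : ℂ} {A : Type*} [Ring A] [Algebra ℂ A]

/-- The `RLL` relation `R X₁ Y₂ = Y₂ X₁ R` between two matrices over a `ℂ`-algebra. -/
def SatisfiesRLL (q : ℂ) (X Y : Matrix (Fin n) (Fin n) A) : Prop :=
  rMatrix q n A * leg1 X * leg2 Y = leg2 Y * leg1 X * rMatrix q n A

lemma isUnit_rMatrix (h : q * q' = 1) : IsUnit (rMatrix q n A) :=
  ⟨⟨_, rMatrix q' n A, rMatrix_mul_rMatrix h A, rMatrix_mul_rMatrix (mul_comm q q' ▸ h) A⟩, rfl⟩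

lemma ringInverse_rMatrix (h : q * q' = 1) : (rMatrix q n A)⁻¹ʳ = rMatrix q' n A :=
  ringInverse_eq_of_mul_eq_one (isUnit_rMatrix h) (rMatrix_mul_rMatrix (mul_comm q q' ▸ h) A)

lemma SatisfiesRLL.ringInverse (h : q * q' = 1) {X Y : Matrix (Fin n) (Fin n) A}
    (hX : IsUnit X) (hY : IsUnit Y) (H : SatisfiesRLL q X Y) : SatisfiesRLL q' X⁻¹ʳ Y⁻¹ʳ := by
  rw [SatisfiesRLL, leg1_ringInverse hX, leg2_ringInverse hY, ← ringInverse_rMatrix h]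
  exact ringInverse_mul_ringInverse_mul_ringInverse (isUnit_rMatrix h) (isUnit_leg1 hX) H

/-- A pair of `L`-operators over a `ℂ`-algebra `A`: matrices `L true = L⁺` and `L false = L⁻` over
`A` that satisfy the defining relations of `U_q(gl_n)`. -/
structure IsLOperatorPair (q : ℂ) (L : Bool → Matrix (Fin n) (Fin n) A) : Prop where
  isUpperTriangular : (L true).IsUpperTriangular
  isLowerTriangular : (L false).IsLowerTriangular
  diag_mul_diag (p : Bool) (i : Fin n) : L p i i * L (!p) i i = 1
  rll (p : Bool) : SatisfiesRLL q (L p) (L p)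
  rll_pm : SatisfiesRLL q (L true) (L false)

namespace IsLOperatorPair

variable {L : Bool → Matrix (Fin n) (Fin n) A}

lemma isUnit_diag (hL : IsLOperatorPair q L) (p : Bool) (i : Fin n) : IsUnit (L p i i) :=
  ⟨⟨_, _, hL.diag_mul_diag p i, by simpa using hL.diag_mul_diag (!p) i⟩, rfl⟩

lemma isUnit (hL : IsLOperatorPair q L) : ∀ p, IsUnit (L p)
  | true => isUnit_of_blockTriangular Function.injective_id hL.isUpperTriangular
      (hL.isUnit_diag true)
  | false => isUnit_of_blockTriangular OrderDual.toDual.injective hL.isLowerTriangular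
      (hL.isUnit_diag false)

lemma ringInverse_diag (hL : IsLOperatorPair q L) (p : Bool) (i : Fin n) :
    (L p)⁻¹ʳ i i = L (!p) i i := by
  have hdiag : (L p)⁻¹ʳ i i = (L p i i)⁻¹ʳ := by
    cases p
    · exact ringInverse_apply_self OrderDual.toDual.injective hL.isLowerTriangular
        (hL.isUnit_diag false) i
    · exact ringInverse_apply_self Function.injective_id hL.isUpperTriangular
        (hL.isUnit_diag true) i
  rw [hdiag]
  exact ringInverse_eq_of_mul_eq_one (hL.isUnit_diag p i)
    (by simpa using hL.diag_mul_diag (!p) i)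

lemma ringInverse (h : q * q' = 1) (hL : IsLOperatorPair q L) :
    IsLOperatorPair q' fun p => (L p)⁻¹ʳ where
  isUpperTriangular := blockTriangular_ringInverse Function.injective_id hL.isUpperTriangular
    (hL.isUnit_diag true)
  isLowerTriangular := blockTriangular_ringInverse OrderDual.toDual.injective
    hL.isLowerTriangular (hL.isUnit_diag false)
  diag_mul_diag p i := by
    rw [hL.ringInverse_diag, hL.ringInverse_diag, hL.diag_mul_diag]
  rll p := (hL.rll p).ringInverse h (hL.isUnit p) (hL.isUnit p)
  rll_pm := hL.rll_pm.ringInverse h (hL.isUnit true) (hL.isUnit false)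

end IsLOperatorPair

end LOperators

section UniversalProperty

variable {n : ℕ} {q : ℂ} {A : Type*} [Ring A] [Algebra ℂ A]

lemma satisfiesRLL_iff (g : FreeAlgebra ℂ (GenGL n) →ₐ[ℂ] A) (p s : Bool) :
    SatisfiesRLL q (fun i j => g (gl n p i j)) (fun i j => g (gl n s i j)) ↔
      ∀ v w, g ((RcGL q n * leg1 (gl n p) * leg2 (gl n s)) v w) =
        g ((leg2 (gl n s) * leg1 (gl n p) * RcGL q n) v w) := by
  have hR : (RcGL q n).map g = rMatrix q n A := rMatrix_map q g
  have hleg1 : (leg1 (gl n p)).map g = leg1 fun i j => g (gl n p i j) := leg1_map g.toRingHom _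
  have hleg2 : (leg2 (gl n s)).map g = leg2 fun i j => g (gl n s i j) := leg2_map g.toRingHom _
  unfold SatisfiesRLL
  rw [← hR, ← hleg1, ← hleg2]
  simp only [← Matrix.map_mul, ← Matrix.ext_iff, map_apply]

lemma isLOperatorPair_iff (g : FreeAlgebra ℂ (GenGL n) →ₐ[ℂ] A) :
    IsLOperatorPair q (fun p i j => g (gl n p i j)) ↔
      ∀ ⦃x y⦄, relGL q n x y → g x = g y := by
  constructor
  · rintro hL _ _ (hij | hij | i | i | ⟨p, v, w⟩ | ⟨v, w⟩)
    · rw [map_zero]; exact hL.isLowerTriangular hij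
    · rw [map_zero]; exact hL.isUpperTriangular hij
    · rw [map_mul, map_one]; exact hL.diag_mul_diag false i
    · rw [map_mul, map_one]; exact hL.diag_mul_diag true i
    · exact (satisfiesRLL_iff g p p).1 (hL.rll p) v w
    · exact (satisfiesRLL_iff g true false).1 hL.rll_pm v w
  · intro hg
    refine ⟨fun i j hij => ?_, fun i j hij => ?_, fun p i => ?_, fun p => ?_, ?_⟩
    · exact (hg (.tri_plus hij)).trans (map_zero g)
    · exact (hg (.tri_minus hij)).trans (map_zero g)
    · cases p
      · simpa using hg (.diag_mp i)
      · simpa using hg (.diag_pm i)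
    · exact (satisfiesRLL_iff g p p).2 fun v w => hg (.rll p v w)
    · exact (satisfiesRLL_iff g true false).2 fun v w => hg (.rll_pm v w)

lemma isLOperatorPair_LM (q : ℂ) (n : ℕ) : IsLOperatorPair q (LM q n) :=
  (isLOperatorPair_iff (RingQuot.mkAlgHom ℂ (relGL q n))).2 fun _ _ => RingQuot.mkAlgHom_rel ℂ

lemma algHom_ext_of_LM {f g : UqGL q n →ₐ[ℂ] A}
    (h : ∀ p, (LM q n p).map f = (LM q n p).map g) : f = g :=
  RingQuot.ringQuot_ext' _ _ _ <| FreeAlgebra.hom_ext <| funext fun x =>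
    congr_fun₂ (h x.1) x.2.1 x.2.2

lemma exists_algHom_map_LM_eq {L : Bool → Matrix (Fin n) (Fin n) A} (hL : IsLOperatorPair q L) :
    ∃ f : UqGL q n →ₐ[ℂ] A, ∀ p, (LM q n p).map f = L p := by
  let g : FreeAlgebra ℂ (GenGL n) →ₐ[ℂ] A := FreeAlgebra.lift ℂ fun x => L x.1 x.2.1 x.2.2
  have hg : (fun p i j => g (gl n p i j)) = L := by
    funext p i j
    exact FreeAlgebra.lift_ι_apply _ _
  have hrel := (isLOperatorPair_iff g).1 (hg ▸ hL)
  refine ⟨RingQuot.liftAlgHom ℂ ⟨g, hrel⟩, fun p => ?_⟩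
  ext i j
  exact (RingQuot.liftAlgHom_mkAlgHom_apply ℂ g hrel _).trans (congrFun (congr_fun₂ hg p i) j)

end UniversalProperty

section Inversion

variable {n : ℕ} {q q' : ℂ}

lemma exists_algHom_map_LM_eq_ringInverse (n : ℕ) (h : q * q' = 1) :
    ∃ φ : UqGL q n →ₐ[ℂ] UqGL q' n, ∀ p, (LM q n p).map φ = (LM q' n p)⁻¹ʳ :=
  exists_algHom_map_LM_eq ((isLOperatorPair_LM q' n).ringInverse (mul_comm q q' ▸ h))

lemma comp_eq_id_of_map_LM_eq_ringInverse {φ : UqGL q n →ₐ[ℂ] UqGL q' n}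
    {ψ : UqGL q' n →ₐ[ℂ] UqGL q n} (hφ : ∀ p, (LM q n p).map φ = (LM q' n p)⁻¹ʳ)
    (hψ : ∀ p, (LM q' n p).map ψ = (LM q n p)⁻¹ʳ) : ψ.comp φ = AlgHom.id ℂ (UqGL q n) := by
  refine algHom_ext_of_LM fun p => ?_
  calc (LM q n p).map (ψ.comp φ)
      = ψ.mapMatrix (LM q' n p)⁻¹ʳ := by rw [← hφ]; rfl
    _ = (ψ.mapMatrix (LM q' n p))⁻¹ʳ :=
        map_ringInverse ψ.mapMatrix ((isLOperatorPair_LM q' n).isUnit p)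
    _ = (LM q n p)⁻¹ʳ⁻¹ʳ := congrArg Ring.inverse (hψ p)
    _ = LM q n p := Ring.inverse_inverse ((isLOperatorPair_LM q n).isUnit p)

end Inversion

theorem stmt_16_general (n : ℕ) {q : ℂ} (hq : q ≠ 0) :
    ∃ φ : UqGL q n ≃ₐ[ℂ] UqGL q⁻¹ n, ∀ p : Bool,
      LM q⁻¹ n p * (LM q n p).map φ = 1 ∧ (LM q n p).map φ * LM q⁻¹ n p = 1 := by
  obtain ⟨φ, hφ⟩ := exists_algHom_map_LM_eq_ringInverse n (mul_inv_cancel₀ hq)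
  obtain ⟨ψ, hψ⟩ := exists_algHom_map_LM_eq_ringInverse n (inv_mul_cancel₀ hq)
  refine ⟨AlgEquiv.ofAlgHom φ ψ (comp_eq_id_of_map_LM_eq_ringInverse hψ hφ)
    (comp_eq_id_of_map_LM_eq_ringInverse hφ hψ), fun p => ?_⟩
  have hunit := (isLOperatorPair_LM q⁻¹ n).isUnit p
  rw [show (LM q n p).map (AlgEquiv.ofAlgHom φ ψ _ _) = (LM q⁻¹ n p)⁻¹ʳ from hφ p]
  exact ⟨Ring.mul_inverse_cancel _ hunit, Ring.inverse_mul_cancel _ hunit⟩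

/-- The assignment `L^± ↦ (L^±)⁻¹` (entrywise on the generator matrices)
defines an algebra isomorphism `U_q(gl_n) → U_{q⁻¹}(gl_n)`. -/
theorem stmt_16 (n : ℕ) (hn : 1 ≤ n) (q : ℂ) (hq0 : q ≠ 0)
    (hq : ∀ k : ℕ, k ≠ 0 → q ^ k ≠ 1) :
    ∃ φ : UqGL q n ≃ₐ[ℂ] UqGL q⁻¹ n,
      ∀ Lpinv Lminv : Matrix (Fin n) (Fin n) (UqGL q⁻¹ n),
        LM q⁻¹ n true * Lpinv = 1 → Lpinv * LM q⁻¹ n true = 1 →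
        LM q⁻¹ n false * Lminv = 1 → Lminv * LM q⁻¹ n false = 1 →
        ∀ i j : Fin n,
          φ (lG q n true i j) = Lpinv i j ∧ φ (lG q n false i j) = Lminv i j := by
  obtain ⟨φ, hφ⟩ := stmt_16_general n hq0
  exact ⟨φ, fun _ _ hP _ hM _ i j =>
    ⟨ext_iff.2 (left_inv_eq_right_inv (hφ true).2 hP) i j,
      ext_iff.2 (left_inv_eq_right_inv (hφ false).2 hM) i j⟩⟩
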